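/- Let f ≥ 3 be an odd integer and let S = PSL(2, 3^f). Then the only non-principal irreducible complex character of S that has an extension to Aut(S) is the Steinberg character, i.e. the unique irreducible character of S of degree 3^f. -/

import Mathlib

open scoped MatrixGroups

noncomputable section

/-- `χ` is the character of some irreducible complex representation of `G`. -/
def IsIrrChar (G : Type) [Group G] (χ : G → ℂ) : Prop :=
  ∃ V : FDRep ℂ G, CategoryTheory.Simple V ∧ ∀ g : G, FDRep.character V g = χ g

/-- `α : S → ℂ` has an extension to `Aut S`, through the embedding of `S` in `Aut S`
given by inner automorphisms. -/
def ExtendsToAut (S : Type) [Group S] (α : S → ℂ) : Prop :=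
  ∃ ψ : MulAut S → ℂ, IsIrrChar (MulAut S) ψ ∧ ∀ s : S, ψ (MulAut.conj s) = α s

/-- The inertia subgroup `I_G(λ)` of a (character) `lam : M → ℂ` of a normal
subgroup `M` of `G`: the set of `g ∈ G` with `lam ∘ (conjugation by g) = lam`. -/
def inertia {G : Type} [Group G] (M : Subgroup G) (hM : M.Normal) (lam : ↥M → ℂ) :
    Subgroup G where
  carrier := {g : G | ∀ m : ↥M, lam ⟨g * m * g⁻¹, hM.conj_mem m.1 m.2 g⟩ = lam m}
  one_mem' := by
    intro m
    have : ((1 : G) * m * (1 : G)⁻¹) = (m : G) := by group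
    exact congrArg lam (Subtype.ext this)
  mul_mem' := by
    intro a b ha hb m
    have key : ∀ (x y : G) (hx : x ∈ M) (hy : y ∈ M), x = y →
        lam ⟨x, hx⟩ = lam ⟨y, hy⟩ := by
      rintro x y hx hy rfl; rfl
    have h1 := ha ⟨b * m * b⁻¹, hM.conj_mem m.1 m.2 b⟩
    have h2 := hb m
    calc lam ⟨(a * b) * m * (a * b)⁻¹, hM.conj_mem m.1 m.2 (a * b)⟩
        = lam ⟨a * (b * m * b⁻¹) * a⁻¹, hM.conj_mem _ (hM.conj_mem m.1 m.2 b) a⟩ :=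
          key _ _ _ _ (by group)
      _ = lam ⟨b * m * b⁻¹, hM.conj_mem m.1 m.2 b⟩ := h1
      _ = lam m := h2
  inv_mem' := by
    intro a ha m
    have key : ∀ (x y : G) (hx : x ∈ M) (hy : y ∈ M), x = y →
        lam ⟨x, hx⟩ = lam ⟨y, hy⟩ := by
      rintro x y hx hy rfl; rfl
    have h := ha ⟨a⁻¹ * m * (a⁻¹)⁻¹, hM.conj_mem _ m.2 a⁻¹⟩
    have h2 : lam ⟨a * (a⁻¹ * m * (a⁻¹)⁻¹) * a⁻¹,
        hM.conj_mem _ (hM.conj_mem m.1 m.2 a⁻¹) a⟩ = lam m :=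
      key _ _ _ _ (by group)
    exact h.symm.trans h2

/-- A (character) `lam : M → ℂ` of a subgroup `M` of `G` has an extension to
the subgroup `H` of `G`: some irreducible character of `H` restricts to `lam`. -/
def ExtendsToSubgroup {G : Type} [Group G] (M H : Subgroup G) (lam : ↥M → ℂ) : Prop :=
  ∃ ψ : ↥H → ℂ, IsIrrChar ↥H ψ ∧
    ∀ (x : G) (hxM : x ∈ M) (hxH : x ∈ H), ψ ⟨x, hxH⟩ = lam ⟨x, hxM⟩

/-!
Write `q = 3 ^ f` and let `σ` be the automorphism of `S = PSL(2, q)` composed of `x ↦ x ^ 3` on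
entries and conjugation by `diag(1, -1)`. As `-1` is not a square in `𝔽_q`, the only conjugacy
classes fixed by `σ` are the identity and the class of involutions. By Brauer's permutation lemma
`σ` then fixes at most two irreducible characters. A character extending to `Aut S` is fixed by `σ`,
and two such characters are known: the trivial one and the Steinberg character `St`, the number of
fixed points on the projective line minus one. The latter is irreducible by 2-transitivity and
extends because the projective line is, as an `S`-set, the set of Sylow 3-subgroups, on which
`Aut S` acts.

It remains to see that an irreducible `χ` of degree `q` is `St`, the only nontrivial constituent of
the permutation character on the projective line. By Frobenius reciprocity it suffices that the sum
of `χ` over the Borel subgroup of `SL(2, q)` is nonzero. With `c` and `d` the dimensions of the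
invariants of the diagonal and of the upper unipotent subgroup, that sum is
`q ((q - 1) c + 2 d - 2 q)`. Here `c` is odd, by the trace of the Weyl element on the invariants of
the diagonal subgroup, and `2 d ≤ q`, since no nonzero vector is invariant under two opposite
unipotent subgroups; so the sum cannot vanish.
-/

section IrreducibleCharacters

theorem character_eq_of_isConj {k G V : Type*} [Field k] [Group G] [AddCommGroup V] [Module k V]
    (ρ : Representation k G V) {g h : G} (hgh : IsConj g h) : ρ.character g = ρ.character h := by
  obtain ⟨c, rfl⟩ := isConj_iff.1 hgh
  exact (ρ.char_conj g c).symm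

theorem character_neg {k G V : Type*} [Field k] [Group G] [HasDistribNeg G] [AddCommGroup V]
    [Module k V] {ρ : Representation k G V} (hρ : ρ (-1) = 1) (g : G) :
    ρ.character (-g) = ρ.character g := by
  rw [Representation.character, Representation.character, ← neg_one_mul, map_mul, hρ, one_mul]

variable {G : Type} [Group G] {χ ψ : G → ℂ}

theorem IsIrrChar.exists_representation (hχ : IsIrrChar G χ) :
    ∃ (V : Type) (_ : AddCommGroup V) (_ : Module ℂ V) (_ : FiniteDimensional ℂ V)
      (ρ : Representation ℂ G V), ρ.character = χ := by
  obtain ⟨V, -, hV⟩ := hχ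
  exact ⟨V, inferInstance, inferInstance, inferInstance, V.ρ, funext hV⟩

theorem IsIrrChar.eq_of_isConj (hχ : IsIrrChar G χ) {g h : G} (hgh : IsConj g h) :
    χ g = χ h := by
  obtain ⟨V, _, _, _, ρ, rfl⟩ := hχ.exists_representation
  exact character_eq_of_isConj ρ hgh

theorem isIrrChar_character_iff [Fintype G] {V : Type} [AddCommGroup V] [Module ℂ V]
    [FiniteDimensional ℂ V] (ρ : Representation ℂ G V) :
    IsIrrChar G ρ.character ↔
      ∑ g : G, ρ.character g * ρ.character g⁻¹ = Nat.card G := by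
  constructor
  · rintro ⟨W, hW, hWρ⟩
    simpa only [hWρ] using (FDRep.simple_iff_char_is_norm_one W).1 hW
  · exact fun h => ⟨FDRep.of ρ, (FDRep.simple_iff_char_is_norm_one _).2 h, fun _ => rfl⟩

theorem isIrrChar_character [Finite G] {V : Type} [AddCommGroup V] [Module ℂ V]
    [FiniteDimensional ℂ V] (ρ : Representation ℂ G V) [ρ.IsIrreducible] :
    IsIrrChar G ρ.character := by
  have := Fintype.ofFinite G
  have hG : (Nat.card G : ℂ) ≠ 0 := NeZero.ne _
  have := invertibleOfNonzero hG
  have hρ := Representation.char_orthonormal ρ ρ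
  rw [if_pos ⟨Representation.Equiv.refl ρ⟩, inv_mul_eq_one₀ hG] at hρ
  exact (isIrrChar_character_iff ρ).2 hρ.symm

theorem IsIrrChar.sum_mul_inv_self [Fintype G] (hχ : IsIrrChar G χ) :
    ∑ g, χ g * χ g⁻¹ = Nat.card G := by
  obtain ⟨V, _, _, _, ρ, rfl⟩ := hχ.exists_representation
  exact (isIrrChar_character_iff ρ).1 hχ

theorem IsIrrChar.sum_mul_inv_eq_zero [Fintype G] (hχ : IsIrrChar G χ) (hψ : IsIrrChar G ψ)
    (hne : χ ≠ ψ) : ∑ g, χ g * ψ g⁻¹ = 0 := by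
  obtain ⟨V, hV, hVχ⟩ := hχ
  obtain ⟨W, hW, hWψ⟩ := hψ
  have hG : (Nat.card G : ℂ) ≠ 0 := NeZero.ne _
  have := invertibleOfNonzero hG
  have hVW : ¬ Nonempty (V ≅ W) := by
    rintro ⟨i⟩
    exact hne (funext fun g => by rw [← hVχ, ← hWψ, FDRep.char_iso i])
  simpa [hVW, hVχ, hWψ, hG] using FDRep.char_orthonormal V W

theorem sum_comp_eq_card_ker_mul_sum {G H R : Type*} [Group G] [Group H] [Fintype G] [Fintype H]
    [NonAssocSemiring R] {π : G →* H} (hπ : Function.Surjective π) (F : H → R) :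
    ∑ g, F (π g) = Nat.card π.ker * ∑ h, F h := by
  classical
  have hfiber (h : H) : ∑ g with π g = h, F (π g) = Nat.card π.ker * F h := by
    rw [Finset.sum_congr rfl fun g hg => congrArg F (Finset.mem_filter.1 hg).2, Finset.sum_const,
      MonoidHom.card_fiber_eq_of_mem_range π (hπ h) ⟨1, map_one π⟩, nsmul_eq_mul,
      ← Fintype.card_subtype, ← Nat.card_eq_fintype_card]
    rfl
  rw [← Finset.sum_fiberwise Finset.univ π, Finset.sum_congr rfl fun h _ => hfiber h,
    Finset.mul_sum]

theorem IsIrrChar.comp_of_surjective {H : Type} [Group H] [Finite H] [Finite G]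
    (hχ : IsIrrChar G χ) {π : H →* G} (hπ : Function.Surjective π) : IsIrrChar H (χ ∘ π) := by
  have := Fintype.ofFinite G
  have := Fintype.ofFinite H
  obtain ⟨V, _, _, _, ρ, rfl⟩ := hχ.exists_representation
  refine (isIrrChar_character_iff (ρ.comp π)).2 ?_
  have hcard := sum_comp_eq_card_ker_mul_sum hπ fun _ => (1 : ℂ)
  simp only [Finset.sum_const, Finset.card_univ, nsmul_eq_mul, mul_one,
    ← Nat.card_eq_fintype_card] at hcard
  rw [hcard, ← hχ.sum_mul_inv_self,
    ← sum_comp_eq_card_ker_mul_sum hπ fun g => ρ.character g * ρ.character g⁻¹]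
  exact Finset.sum_congr rfl fun h _ =>
    congrArg (ρ.character (π h) * ρ.character ·) (map_inv π h)

theorem isIrrChar_one [Finite G] : IsIrrChar G (fun _ => 1) := by
  have := Fintype.ofFinite G
  have h : (Representation.trivial ℂ G ℂ).character = fun _ => 1 := by
    ext g
    simp [Representation.character, Representation.trivial]
  rw [← h, isIrrChar_character_iff, h]
  simp

theorem IsIrrChar.comp_inv [Finite G] (hχ : IsIrrChar G χ) :
    IsIrrChar G fun g => χ g⁻¹ := by
  have := Fintype.ofFinite G
  obtain ⟨V, _, _, _, ρ, rfl⟩ := hχ.exists_representation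
  rw [← funext ρ.char_dual, isIrrChar_character_iff, ← hχ.sum_mul_inv_self]
  exact Finset.sum_congr rfl fun g _ => by rw [ρ.char_dual, ρ.char_dual, inv_inv, mul_comm]

end IrreducibleCharacters

section Completeness

open scoped MonoidAlgebra

variable {G : Type} [Group G]

theorem asAlgebraHom_ofModule' (M : Type) [AddCommGroup M] [Module ℂ M] [Module ℂ[G] M]
    [IsScalarTower ℂ ℂ[G] M] (a : ℂ[G]) (m : M) :
    (Representation.ofModule' M).asAlgebraHom a m = a • m :=
  LinearMap.congr_fun (DFunLike.congr_fun
    ((MonoidAlgebra.lift ℂ (M →ₗ[ℂ] M) G).apply_symm_apply (Algebra.lsmul ℂ ℂ M)) a) m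

theorem isIrreducible_ofModule' (M : Type) [AddCommGroup M] [Module ℂ M] [Module ℂ[G] M]
    [IsScalarTower ℂ ℂ[G] M] [IsSimpleModule ℂ[G] M] :
    (Representation.ofModule' M : Representation ℂ G M).IsIrreducible := by
  let ρ : Representation ℂ G M := Representation.ofModule' M
  let e : ρ.asModule ≃ₗ[ℂ[G]] M :=
    { ρ.asModuleEquiv with
      map_smul' := fun a m =>
        (ρ.asModuleEquiv_map_smul a m).trans (asAlgebraHom_ofModule' M a (ρ.asModuleEquiv m)) }
  exact (Representation.irreducible_iff_isSimpleModule_asModule ρ).2 (IsSimpleModule.congr e)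

variable [Fintype G]

/-- The element `∑ g, f g • g` of the group algebra attached to a function on the conjugacy
classes; these elements make up the centre of the group algebra. -/
def classSum (f : ConjClasses G → ℂ) : ℂ[G] :=
  ∑ g : G, MonoidAlgebra.single g (f (ConjClasses.mk g))

theorem coeff_classSum (f : ConjClasses G → ℂ) (g : G) :
    (classSum f).coeff g = f (ConjClasses.mk g) := by
  classical
  simp [classSum, Finsupp.single_apply]

theorem single_mul_classSum (f : ConjClasses G → ℂ) (x : G) :
    MonoidAlgebra.single x 1 * classSum f = classSum f * MonoidAlgebra.single x 1 := by
  simp only [classSum, Finset.mul_sum, Finset.sum_mul, MonoidAlgebra.single_mul_single, one_mul,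
    mul_one]
  refine Fintype.sum_equiv (MulAut.conj x).toEquiv _ _ fun g => ?_
  have hconj : ConjClasses.mk (x * g * x⁻¹) = ConjClasses.mk g :=
    ConjClasses.mk_eq_mk_iff_isConj.2 (isConj_iff.2 ⟨x, rfl⟩).symm
  simp [MulAut.conj_apply, hconj]

variable {V : Type} [AddCommGroup V] [Module ℂ V]

theorem trace_asAlgebraHom_classSum (ρ : Representation ℂ G V) (f : ConjClasses G → ℂ) :
    LinearMap.trace ℂ V (ρ.asAlgebraHom (classSum f)) =
      ∑ g, f (ConjClasses.mk g) * ρ.character g := by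
  simp [classSum, Representation.asAlgebraHom_single, Representation.character]

-- Schur: a central element acts on an irreducible representation as a scalar.
theorem asAlgebraHom_classSum_eq_zero [FiniteDimensional ℂ V] (ρ : Representation ℂ G V)
    [ρ.IsIrreducible] (f : ConjClasses G → ℂ)
    (hf : ∑ g, f (ConjClasses.mk g) * ρ.character g = 0) :
    ρ.asAlgebraHom (classSum f) = 0 := by
  let T : Representation.IntertwiningMap ρ ρ :=
    ⟨ρ.asAlgebraHom (classSum f), fun x => by
      simpa [Module.End.mul_eq_comp] using
        congrArg ρ.asAlgebraHom (single_mul_classSum f x).symm⟩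
  obtain ⟨c, hc⟩ :=
    (Representation.IsIrreducible.algebraMap_intertwiningMap_bijective_of_isAlgClosed
      (ρ := ρ)).2 T
  have hscalar : ρ.asAlgebraHom (classSum f) = c • LinearMap.id :=
    congrArg (fun S => S.toLinearMap) hc.symm
  have hV : (Module.finrank ℂ V : ℂ) ≠ 0 := by
    have := IsSimpleModule.nontrivial ℂ[G] ρ.asModule
    have : Nontrivial V := ρ.asModuleEquiv.symm.toEquiv.nontrivial
    exact_mod_cast (Module.finrank_pos (R := ℂ) (M := V)).ne'
  have htrace : c * Module.finrank ℂ V = 0 := by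
    rw [← hf, ← trace_asAlgebraHom_classSum, hscalar]
    simp
  rw [hscalar, (mul_eq_zero.1 htrace).resolve_right hV, zero_smul]

theorem classSum_smul_eq_zero (f : ConjClasses G → ℂ)
    (hf : ∀ χ, IsIrrChar G χ → ∑ g, f (ConjClasses.mk g) * χ g = 0)
    (M : Type) [AddCommGroup M] [Module ℂ M] [Module ℂ[G] M] [IsScalarTower ℂ ℂ[G] M]
    [IsSimpleModule ℂ[G] M] (m : M) : classSum f • m = 0 := by
  have := isIrreducible_ofModule' (G := G) M
  have : FiniteDimensional ℂ M := Module.Finite.trans ℂ[G] _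
  rw [← asAlgebraHom_ofModule', asAlgebraHom_classSum_eq_zero _ f (hf _ (isIrrChar_character _)),
    LinearMap.zero_apply]

-- The group algebra is semisimple, so an element killing every simple module is zero.
theorem eq_zero_of_sum_mul_irrChar_eq_zero (f : ConjClasses G → ℂ)
    (hf : ∀ χ, IsIrrChar G χ → ∑ g, f (ConjClasses.mk g) * χ g = 0) : f = 0 := by
  suffices hz : classSum f ∈ Ring.jacobson ℂ[G] by
    rw [IsSemisimpleRing.jacobson_eq_bot, Submodule.mem_bot] at hz
    ext c
    obtain ⟨g, rfl⟩ := ConjClasses.mk_surjective c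
    rw [← coeff_classSum f g, hz, MonoidAlgebra.coeff_zero, Finsupp.zero_apply, Pi.zero_apply]
  rw [Ring.jacobson, Module.jacobson, Submodule.mem_sInf]
  intro I hI
  have : IsSimpleModule ℂ[G] (ℂ[G] ⧸ I) := isSimpleModule_iff_isCoatom.2 hI
  have hone := classSum_smul_eq_zero f hf (ℂ[G] ⧸ I) (Submodule.Quotient.mk 1)
  rw [← Submodule.Quotient.mk_smul, Submodule.Quotient.mk_eq_zero] at hone
  simpa using hone

end Completeness

section BrauerPermutationLemma

theorem trace_eq_ncard_fixedPoints {ι R M : Type*} [Finite ι] [CommRing R] [AddCommGroup M]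
    [Module R M] (b : Module.Basis ι R M) (s : ι → ι) (P : M →ₗ[R] M)
    (hP : ∀ i, P (b i) = b (s i)) :
    LinearMap.trace R M P = (Function.fixedPoints s).ncard := by
  classical
  have := Fintype.ofFinite ι
  rw [LinearMap.trace_eq_matrix_trace R b, ← Nat.card_coe_set_eq, Nat.card_eq_fintype_card,
    Fintype.card_subtype]
  simp [Matrix.trace, LinearMap.toMatrix_apply, hP, Finsupp.single_apply, Function.mem_fixedPoints,
    Function.IsFixedPt]

theorem trace_funLeft {X R : Type*} [Finite X] [CommRing R] (s : X → X) :
    LinearMap.trace R (X → R) (LinearMap.funLeft R R s) = (Function.fixedPoints s).ncard := by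
  classical
  have := Fintype.ofFinite X
  rw [LinearMap.trace_eq_matrix_trace R (Pi.basisFun R X), ← Nat.card_coe_set_eq,
    Nat.card_eq_fintype_card, Fintype.card_subtype]
  simp [Matrix.trace, Pi.single_apply, LinearMap.funLeft_apply, Function.mem_fixedPoints,
    Function.IsFixedPt]

variable {G : Type} [Group G]

/-- An irreducible character as a function on the conjugacy classes. -/
def IsIrrChar.onConjClasses {χ : G → ℂ} (hχ : IsIrrChar G χ) : ConjClasses G → ℂ :=
  Quotient.lift χ fun _ _ => hχ.eq_of_isConj

/-- The bilinear form `∑ g, φ g * ψ g⁻¹` on class functions, which is `|G|` times the usual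
pairing of characters. -/
def classForm (G : Type) [Group G] [Fintype G] : LinearMap.BilinForm ℂ (ConjClasses G → ℂ) :=
  LinearMap.mk₂ ℂ (fun φ ψ => ∑ g : G, φ (ConjClasses.mk g) * ψ (ConjClasses.mk g⁻¹))
    (fun _ _ _ => by simp [add_mul, Finset.sum_add_distrib])
    (fun _ _ _ => by simp [Finset.mul_sum, mul_assoc])
    (fun _ _ _ => by simp [mul_add, Finset.sum_add_distrib])
    (fun _ _ _ => by simp [Finset.mul_sum, mul_left_comm])

theorem classForm_isSymm [Fintype G] : (classForm G).IsSymm := by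
  refine ⟨fun φ ψ => ?_⟩
  refine Fintype.sum_equiv (Equiv.inv G) _ _ fun g => ?_
  rw [Equiv.inv_apply, inv_inv, mul_comm]

theorem classForm_onConjClasses [Fintype G] (φ : ConjClasses G → ℂ) {χ : G → ℂ}
    (hχ : IsIrrChar G χ) :
    classForm G φ hχ.onConjClasses = ∑ g, φ (ConjClasses.mk g) * χ g⁻¹ :=
  rfl

theorem eq_zero_of_classForm_irrChar_eq_zero [Fintype G] (φ : ConjClasses G → ℂ)
    (hφ : ∀ (χ : G → ℂ) (hχ : IsIrrChar G χ), classForm G φ hχ.onConjClasses = 0) : φ = 0 :=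
  eq_zero_of_sum_mul_irrChar_eq_zero φ fun χ hχ => by
    simpa only [classForm_onConjClasses, inv_inv] using hφ _ hχ.comp_inv

theorem classForm_nondegenerate [Fintype G] : (classForm G).Nondegenerate :=
  classForm_isSymm.isRefl.nondegenerate_iff_separatingLeft.2
    fun φ hφ => eq_zero_of_classForm_irrChar_eq_zero φ fun _ _ => hφ _

variable (G)

theorem linearIndependent_irrChars [Finite G] :
    LinearIndependent ℂ fun χ : {χ : G → ℂ // IsIrrChar G χ} => χ.2.onConjClasses := by
  have := Fintype.ofFinite G
  refine LinearMap.linearIndependent_of_isOrthoᵢ (B := classForm G) ?_ ?_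
  · exact fun χ ψ hne => χ.2.sum_mul_inv_eq_zero ψ.2 (Subtype.coe_injective.ne hne)
  · exact fun χ hχ => NeZero.ne (Nat.card G : ℂ) (χ.2.sum_mul_inv_self.symm.trans hχ)

theorem span_irrChars [Finite G] :
    Submodule.span ℂ
      (Set.range fun χ : {χ : G → ℂ // IsIrrChar G χ} => χ.2.onConjClasses) = ⊤ := by
  have := Fintype.ofFinite G
  let W := Submodule.span ℂ
    (Set.range fun χ : {χ : G → ℂ // IsIrrChar G χ} => χ.2.onConjClasses)
  have hW : (classForm G).orthogonal W = ⊥ := by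
    refine (Submodule.eq_bot_iff _).2 fun φ hφ => ?_
    refine eq_zero_of_classForm_irrChar_eq_zero φ fun χ hχ => ?_
    rw [← classForm_isSymm.eq]
    exact hφ _ (Submodule.subset_span ⟨⟨χ, hχ⟩, rfl⟩)
  have := (classForm G).orthogonal_orthogonal classForm_nondegenerate classForm_isSymm.isRefl W
  rwa [hW, LinearMap.BilinForm.orthogonal_bot, eq_comm] at this

/-- The basis of the space of class functions formed by the irreducible characters. -/
def irrCharBasis [Finite G] :
    Module.Basis {χ : G → ℂ // IsIrrChar G χ} ℂ (ConjClasses G → ℂ) :=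
  Module.Basis.mk (linearIndependent_irrChars G) (span_irrChars G).ge

theorem finite_setOf_isIrrChar [Finite G] : {χ : G → ℂ | IsIrrChar G χ}.Finite :=
  Module.Finite.finite_basis (irrCharBasis G)

variable {G}

theorem ncard_fixed_irrChars_eq_ncard_fixed_conjClasses [Finite G] (σ : MulAut G) :
    {χ : G → ℂ | IsIrrChar G χ ∧ χ ∘ σ = χ}.ncard =
      (Function.fixedPoints (ConjClasses.map (σ : G →* G))).ncard := by
  let s : {χ : G → ℂ // IsIrrChar G χ} → {χ : G → ℂ // IsIrrChar G χ} :=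
    fun χ => ⟨χ.1 ∘ σ, χ.2.comp_of_surjective (π := (σ : G →* G)) σ.surjective⟩
  have hs : {χ : G → ℂ | IsIrrChar G χ ∧ χ ∘ σ = χ} = Subtype.val '' Function.fixedPoints s := by
    ext χ
    exact ⟨fun h => ⟨⟨χ, h.1⟩, Subtype.ext h.2, rfl⟩,
      by rintro ⟨ψ, hψ, rfl⟩; exact ⟨ψ.2, congrArg Subtype.val hψ⟩⟩
  have : Finite {χ : G → ℂ // IsIrrChar G χ} := finite_setOf_isIrrChar G
  have hperm : ∀ χ, LinearMap.funLeft ℂ ℂ (ConjClasses.map (σ : G →* G)) (irrCharBasis G χ) =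
      irrCharBasis G (s χ) := by
    intro χ
    simp only [irrCharBasis, Module.Basis.coe_mk]
    ext c
    obtain ⟨g, rfl⟩ := ConjClasses.mk_surjective c
    rfl
  rw [hs, Set.ncard_image_of_injective _ Subtype.val_injective, ← Nat.cast_inj (R := ℂ),
    ← trace_eq_ncard_fixedPoints (irrCharBasis G) s _ hperm, trace_funLeft]

theorem IsIrrChar.eq_or_eq_of_comp_eq [Finite G] {σ : MulAut G}
    (hσ : (Function.fixedPoints (ConjClasses.map (σ : G →* G))).ncard ≤ 2) {χ χ₁ χ₂ : G → ℂ}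
    (hχ : IsIrrChar G χ) (hχ₁ : IsIrrChar G χ₁) (hχ₂ : IsIrrChar G χ₂) (hσχ : χ ∘ σ = χ)
    (hσχ₁ : χ₁ ∘ σ = χ₁) (hσχ₂ : χ₂ ∘ σ = χ₂) (hne : χ₁ ≠ χ₂) : χ = χ₁ ∨ χ = χ₂ := by
  have hfinite : {χ : G → ℂ | IsIrrChar G χ ∧ χ ∘ σ = χ}.Finite :=
    Set.Finite.subset (finite_setOf_isIrrChar G) fun _ h => h.1
  have hpair : {χ₁, χ₂} = {χ : G → ℂ | IsIrrChar G χ ∧ χ ∘ σ = χ} := by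
    refine Set.eq_of_subset_of_ncard_le ?_ ?_ hfinite
    · exact Set.pair_subset ⟨hχ₁, hσχ₁⟩ ⟨hχ₂, hσχ₂⟩
    · rwa [ncard_fixed_irrChars_eq_ncard_fixed_conjClasses, Set.ncard_pair hne]
  exact hpair.ge ⟨hχ, hσχ⟩

theorem ExtendsToAut.comp_mulAut {χ : G → ℂ} (hχ : ExtendsToAut G χ) (σ : MulAut G) :
    χ ∘ σ = χ := by
  obtain ⟨ψ, hψ, hψχ⟩ := hχ
  ext s
  have hconj : IsConj (MulAut.conj s) (MulAut.conj (σ s)) :=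
    isConj_iff.2 ⟨σ, by ext; simp⟩
  rw [Function.comp_apply, ← hψχ, ← hψχ, hψ.eq_of_isConj hconj]

end BrauerPermutationLemma

section PermutationCharacters

open MulAction

theorem trace_eq_trace_restrict_ker_add_one {k V : Type*} [Field k] [AddCommGroup V] [Module k V]
    [FiniteDimensional k V] {f : V →ₗ[k] V} {l : V →ₗ[k] k} (hl : l ≠ 0) (hlf : l ∘ₗ f = l)
    (hf : ∀ v ∈ LinearMap.ker l, f v ∈ LinearMap.ker l) :
    LinearMap.trace k V f = LinearMap.trace k (LinearMap.ker l) (f.restrict hf) + 1 := by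
  obtain ⟨v, hv⟩ := LinearMap.surjective hl 1
  -- `p` is the projection onto `ker l` along `v`
  let p : V →ₗ[k] LinearMap.ker l :=
    (LinearMap.id - l.smulRight v).codRestrict _ fun u => by simp [hv]
  have hp_apply (u : V) : (p u : V) = u - l u • v := rfl
  have hp : p ∘ₗ (LinearMap.ker l).subtype = LinearMap.id := by
    ext u
    simp [hp_apply]
  have hrestrict : (LinearMap.ker l).subtype ∘ₗ f.restrict hf ∘ₗ p = f - l.smulRight (f v) := by
    ext u
    simp [hp_apply]
  have htrace := LinearMap.trace_comp_comm' (f.restrict hf ∘ₗ p) (LinearMap.ker l).subtype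
  rw [hrestrict, LinearMap.comp_assoc, hp, LinearMap.comp_id, map_sub, LinearMap.trace_smulRight,
    ← LinearMap.comp_apply, hlf, hv] at htrace
  exact sub_eq_iff_eq_add.1 htrace

/-- The permutation character of `G` on `X` with one copy of the trivial character removed. -/
def reducedPermChar (G X : Type*) [Monoid G] [MulAction G X] (g : G) : ℂ :=
  (fixedBy X g).ncard - 1

variable (G X : Type) [Group G] [MulAction G X]

/-- The permutation representation of `G` on the functions `X → ℂ`. -/
def permRepresentation : Representation ℂ G (X → ℂ) where
  toFun g := LinearMap.funLeft ℂ ℂ (g⁻¹ • ·)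
  map_one' := by ext; simp [LinearMap.funLeft_apply]
  map_mul' g h := LinearMap.ext fun f => by ext; simp [LinearMap.funLeft_apply, mul_smul]

theorem character_permRepresentation [Finite X] (g : G) :
    (permRepresentation G X).character g = (fixedBy X g).ncard := by
  rw [← fixedBy_inv]
  exact trace_funLeft (g⁻¹ • ·)

/-- The functional summing the values of a function on a finite set. -/
def sumValues [Fintype X] : (X → ℂ) →ₗ[ℂ] ℂ :=
  ∑ x, LinearMap.proj x

theorem sumValues_comp_permRepresentation [Fintype X] (g : G) :
    sumValues X ∘ₗ permRepresentation G X g = sumValues X :=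
  LinearMap.ext fun f => by
    simpa [sumValues, permRepresentation, LinearMap.funLeft_apply] using
      Equiv.sum_comp (toPerm g⁻¹) f

/-- The subrepresentation of the permutation representation formed by the functions whose values
add up to zero. -/
def sumZeroSubrepresentation [Fintype X] : Subrepresentation (permRepresentation G X) where
  toSubmodule := LinearMap.ker (sumValues X)
  apply_mem_toSubmodule g f hf :=
    (LinearMap.congr_fun (sumValues_comp_permRepresentation G X g) f).trans hf

theorem character_sumZeroSubrepresentation [Fintype X] [Nonempty X] :
    (sumZeroSubrepresentation G X).toRepresentation.character = reducedPermChar G X := by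
  classical
  ext g
  have hne : sumValues X ≠ 0 := fun h => by
    simpa [sumValues] using LinearMap.congr_fun h (Pi.single (Classical.arbitrary X) 1)
  rw [reducedPermChar, eq_sub_iff_add_eq, ← character_permRepresentation]
  exact (trace_eq_trace_restrict_ker_add_one hne (sumValues_comp_permRepresentation G X g)
    fun _ hf => (sumZeroSubrepresentation G X).apply_mem_toSubmodule g hf).symm

variable {G X}

theorem sum_ncard_fixedBy [Fintype G] [Finite X] :
    ∑ g : G, (fixedBy X g).ncard = Nat.card (orbitRel.Quotient G X) * Nat.card G := by
  classical
  have := Fintype.ofFinite X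
  simpa [← Nat.card_coe_set_eq] using sum_card_fixedBy_eq_card_orbits_mul_card_group G X

theorem fixedBy_prod (g : G) : fixedBy (X × X) g = fixedBy X g ×ˢ fixedBy X g := by
  ext ⟨x, y⟩
  simp [Prod.ext_iff]

theorem card_orbitRel_quotient_prod [IsMultiplyPretransitive G X 2] [Nontrivial X] :
    Nat.card (orbitRel.Quotient G (X × X)) = 2 := by
  have : IsPretransitive G X := isPretransitive_of_is_two_pretransitive
  have hinv : ∀ a b : X × X, orbitRel G (X × X) a b → (a.1 = a.2) = (b.1 = b.2) := by
    rintro _ b ⟨g, rfl⟩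
    exact propext (smul_left_cancel_iff g)
  let diagonal : orbitRel.Quotient G (X × X) → Prop := Quotient.lift (fun a => a.1 = a.2) hinv
  suffices hbij : Function.Bijective diagonal by
    rw [Nat.card_eq_of_bijective diagonal hbij, Nat.card_eq_fintype_card, Fintype.card_prop]
  constructor
  · rintro ⟨x, y⟩ ⟨x', y'⟩ (h : (x = y) = (x' = y'))
    refine Quotient.sound (orbitRel_apply.2 ?_)
    by_cases hxy : x' = y'
    · obtain rfl := h.mpr hxy
      obtain ⟨g, rfl⟩ := exists_smul_eq G x' x
      exact ⟨g, by rw [← hxy]; rfl⟩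
    · obtain ⟨g, rfl, rfl⟩ :=
        is_two_pretransitive_iff.1 ‹_› hxy fun hxy' => hxy (h.mp hxy')
      exact ⟨g, rfl⟩
  · intro P
    obtain ⟨x, y, hxy⟩ := exists_pair_ne X
    by_cases hP : P
    · exact ⟨Quotient.mk _ (x, x), by simp [diagonal, hP]⟩
    · exact ⟨Quotient.mk _ (x, y), by simp [diagonal, hP, hxy]⟩

theorem isIrrChar_reducedPermChar [Finite G] [Finite X] [Nontrivial X]
    [IsMultiplyPretransitive G X 2] : IsIrrChar G (reducedPermChar G X) := by
  have := Fintype.ofFinite G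
  have := Fintype.ofFinite X
  have : IsPretransitive G X := isPretransitive_of_is_two_pretransitive
  have hsum : ∑ g : G, ((fixedBy X g).ncard : ℂ) = Nat.card G := by
    obtain ⟨_⟩ := (pretransitive_iff_unique_quotient_of_nonempty G X).1 ‹_›
    exact_mod_cast (sum_ncard_fixedBy (G := G) (X := X)).trans (by rw [Nat.card_unique, one_mul])
  have hsum_sq : ∑ g : G, ((fixedBy X g).ncard : ℂ) ^ 2 = 2 * Nat.card G := by
    have h := sum_ncard_fixedBy (G := G) (X := X × X)
    simp only [fixedBy_prod, Set.ncard_prod, card_orbitRel_quotient_prod, ← sq] at h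
    exact_mod_cast h
  rw [← character_sumZeroSubrepresentation, isIrrChar_character_iff,
    character_sumZeroSubrepresentation]
  simp only [reducedPermChar, fixedBy_inv, ← sq, sub_sq, Finset.sum_add_distrib,
    Finset.sum_sub_distrib, ← Finset.mul_sum, ← Finset.sum_mul, hsum, hsum_sq]
  simp

-- Frobenius reciprocity for the permutation character.
theorem sum_mul_ncard_fixedBy [Fintype G] [Finite X] [IsPretransitive G X] {F : G → ℂ}
    (hF : ∀ g h, IsConj g h → F g = F h) (x : X) [Fintype (stabilizer G x)] :
    ∑ g, F g * (fixedBy X g).ncard = Nat.card X * ∑ h : stabilizer G x, F h := by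
  classical
  have := Fintype.ofFinite X
  have hcount : ∀ g : G, ((fixedBy X g).ncard : ℂ) = ∑ y : X, if g • y = y then 1 else 0 := by
    intro g
    rw [Finset.sum_boole, ← Fintype.card_subtype, ← Nat.card_coe_set_eq, Nat.card_eq_fintype_card]
    rfl
  have hstab : ∀ y : X, ∑ g, F g * (if g • y = y then 1 else 0) = ∑ h : stabilizer G x, F h := by
    intro y
    obtain ⟨k, rfl⟩ := exists_smul_eq G x y
    calc ∑ g, F g * (if g • k • x = k • x then 1 else 0)
        = ∑ g, F g * (if g ∈ stabilizer G x then 1 else 0) := by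
          refine Fintype.sum_equiv (MulAut.conj k⁻¹).toEquiv _ _ fun g => ?_
          rw [hF g _ (isConj_iff.2 ⟨k⁻¹, rfl⟩)]
          simp [mul_smul, inv_smul_eq_iff]
      _ = ∑ h : stabilizer G x, F h := by
          simp only [mul_ite, mul_one, mul_zero, ← Finset.sum_filter]
          exact Finset.sum_subtype _ (by simp) F
  simp only [hcount, Finset.mul_sum]
  rw [Finset.sum_comm, Finset.sum_congr rfl fun y _ => hstab y]
  simp [Finset.mul_sum]

theorem IsIrrChar.eq_reducedPermChar [Finite G] [Finite X] [Nontrivial X]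
    [IsMultiplyPretransitive G X 2] {χ : G → ℂ} (hχ : IsIrrChar G χ) (hχ_one : χ ≠ fun _ => 1)
    (x : X) [Fintype (stabilizer G x)] (hx : ∑ h : stabilizer G x, χ h ≠ 0) :
    χ = reducedPermChar G X := by
  have := Fintype.ofFinite G
  have : IsPretransitive G X := isPretransitive_of_is_two_pretransitive
  by_contra hne
  have horth_one := hχ.sum_mul_inv_eq_zero isIrrChar_one hχ_one
  have horth := hχ.sum_mul_inv_eq_zero isIrrChar_reducedPermChar hne
  simp only [reducedPermChar, fixedBy_inv, mul_sub, Finset.sum_sub_distrib, horth_one, sub_zero,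
    sum_mul_ncard_fixedBy (fun _ _ => hχ.eq_of_isConj) x] at horth
  exact mul_ne_zero (NeZero.ne (Nat.card X : ℂ)) hx horth

theorem reducedPermChar_one [Finite X] : reducedPermChar G X 1 = Nat.card X - 1 := by
  rw [reducedPermChar, fixedBy_one_eq_univ, Set.ncard_univ]

end PermutationCharacters

section SpecialLinearGroupTwo

section CommRing

variable {R : Type*} [CommRing R]

/-- The element of `SL(2, R)` with rows `(a, b)` and `(c, d)`. -/
def slMk (a b c d : R) (h : a * d - b * c = 1) : SL(2, R) :=
  ⟨!![a, b; c, d], (Matrix.det_fin_two_of a b c d).trans h⟩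

@[simp]
theorem coe_slMk (a b c d : R) (h : a * d - b * c = 1) :
    (slMk a b c d h : Matrix (Fin 2) (Fin 2) R) = !![a, b; c, d] :=
  rfl

theorem sl2_ext_iff {A B : SL(2, R)} :
    A = B ↔ (A 0 0 = B 0 0 ∧ A 0 1 = B 0 1) ∧ A 1 0 = B 1 0 ∧ A 1 1 = B 1 1 := by
  simp [Matrix.SpecialLinearGroup.ext_iff, Fin.forall_fin_two]

theorem sl2_det_eq_one (A : SL(2, R)) : A 0 0 * A 1 1 - A 0 1 * A 1 0 = 1 :=
  (Matrix.det_fin_two A.1).symm.trans A.2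

theorem sl2_mul_apply (A B : SL(2, R)) (i j : Fin 2) :
    (A * B) i j = A i 0 * B 0 j + A i 1 * B 1 j := by
  rw [Matrix.SpecialLinearGroup.coe_mul, Matrix.mul_apply, Fin.sum_univ_two]

theorem trace_eq_of_isConj {n : Type*} [Fintype n] [DecidableEq n]
    {A B : Matrix.SpecialLinearGroup n R} (h : IsConj A B) :
    (A : Matrix n n R).trace = (B : Matrix n n R).trace := by
  obtain ⟨C, rfl⟩ := isConj_iff.1 h
  rw [Matrix.SpecialLinearGroup.coe_mul, Matrix.trace_mul_comm, ← Matrix.SpecialLinearGroup.coe_mul,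
    inv_mul_cancel_left]

/-- The homomorphism sending `x` to the upper unipotent matrix `!![1, x; 0, 1]`. -/
def upperUnipotent : Multiplicative R →* SL(2, R) where
  toFun x := slMk 1 x.toAdd 0 1 (by simp)
  map_one' := by simp [sl2_ext_iff]
  map_mul' x y := by simp [sl2_ext_iff, add_comm]

theorem upperUnipotent_apply (x : Multiplicative R) :
    upperUnipotent x = slMk 1 x.toAdd 0 1 (by simp) :=
  rfl

/-- The homomorphism sending `a` to the diagonal matrix `!![a, 0; 0, a⁻¹]`. -/
def diagonalTorus : Rˣ →* SL(2, R) where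
  toFun a := slMk a 0 0 ↑a⁻¹ (by simp)
  map_one' := by simp [sl2_ext_iff]
  map_mul' a b := by simp [sl2_ext_iff, mul_comm]

/-- The standard representative `!![0, 1; -1, 0]` of the nontrivial Weyl group element. -/
def weylElement : SL(2, R) :=
  slMk 0 1 (-1) 0 (by simp)

end CommRing

variable {K : Type*} [Field K]

theorem sl2_isConj_of_trace_eq {A B : SL(2, K)} (htr : A.1.trace = B.1.trace)
    (hA : A 0 1 ≠ 0) {x : K} (hx : x ≠ 0) (hAB : B 0 1 = x ^ 2 * A 0 1) : IsConj A B := by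
  let P : SL(2, K) := slMk x 0 ((A 0 0 - B 0 0) / (x * A 0 1)) x⁻¹ (by simp [hx])
  refine isConj_iff.2 ⟨P, mul_inv_eq_of_eq_mul ?_⟩
  rw [Matrix.trace_fin_two, Matrix.trace_fin_two] at htr
  have hdetA := sl2_det_eq_one A
  have hdetB := sl2_det_eq_one B
  rw [hAB] at hdetB
  simp only [sl2_ext_iff, sl2_mul_apply, P, coe_slMk, hAB, Matrix.of_apply, Matrix.cons_val',
    Matrix.cons_val_zero, Matrix.cons_val_one, Matrix.cons_val_fin_one]
  refine ⟨⟨?_, ?_⟩, ?_, ?_⟩ <;> field_simp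
  · ring
  · ring
  · linear_combination A 0 0 * htr - hdetA + hdetB
  · linear_combination htr

theorem isSquare_or_isSquare_neg [Finite K] (hK : ¬ IsSquare (-1 : K)) (x : K) :
    IsSquare x ∨ IsSquare (-x) := by
  classical
  have := Fintype.ofFinite K
  by_contra! h
  have hmul := map_mul (quadraticChar K) (-1) x
  rw [neg_one_mul, quadraticChar_neg_one_iff_not_isSquare.2 hK,
    quadraticChar_neg_one_iff_not_isSquare.2 h.1,
    quadraticChar_neg_one_iff_not_isSquare.2 h.2] at hmul
  norm_num at hmul

theorem isConj_weylElement_of_trace_eq_zero [Finite K] (hK : ¬ IsSquare (-1 : K)) {A : SL(2, K)}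
    (htr : A.1.trace = 0) : IsConj weylElement A ∨ IsConj weylElement (-A) := by
  have hA : A 0 1 ≠ 0 := by
    intro h
    rw [Matrix.trace_fin_two] at htr
    have hdet := sl2_det_eq_one A
    exact hK ⟨A 0 0, by linear_combination hdet - A 0 0 * htr + A 1 0 * h⟩
  have hconj : ∀ B : SL(2, K), B.1.trace = 0 → B 0 1 ≠ 0 → IsSquare (B 0 1) →
      IsConj weylElement B := by
    rintro B hB hB01 ⟨s, hs⟩
    have hs0 : s ≠ 0 := fun h => hB01 (by rw [hs, h, mul_zero])
    exact sl2_isConj_of_trace_eq (by simp [weylElement, hB, Matrix.trace_fin_two_of])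
      (by simp [weylElement]) hs0 (by simp [weylElement, hs, sq])
  refine (isSquare_or_isSquare_neg hK (A 0 1)).imp (hconj A htr hA) fun h => ?_
  exact hconj (-A) (by simp [htr]) (by simp [hA]) (by simpa using h)

theorem exists_isConj_upperUnipotent {A : SL(2, K)} (htr : A.1.trace = 2) (hA : A ≠ 1) :
    ∃ x : K, x ≠ 0 ∧ IsConj A (upperUnipotent (.ofAdd x)) := by
  have hconj : ∀ B : SL(2, K), B.1.trace = 2 → B 0 1 ≠ 0 →
      IsConj B (upperUnipotent (.ofAdd (B 0 1))) := fun B hB hB01 =>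
    sl2_isConj_of_trace_eq
      (by simp [upperUnipotent, hB, Matrix.trace_fin_two_of, one_add_one_eq_two]) hB01 one_ne_zero
      (by simp [upperUnipotent])
  by_cases hA01 : A 0 1 = 0
  · have hA10 : A 1 0 ≠ 0 := by
      intro hA10
      have hdet := sl2_det_eq_one A
      rw [Matrix.trace_fin_two] at htr
      have hA00 : A 0 0 = 1 := by
        refine sub_eq_zero.1 (pow_eq_zero_iff two_ne_zero |>.1 ?_)
        linear_combination A 0 0 * htr - hdet - A 1 0 * hA01
      have hA11 : A 1 1 = 1 := by linear_combination htr - hA00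
      exact hA (sl2_ext_iff.2 (by simp [hA01, hA10, hA00, hA11]))
    have hconj' : IsConj A (weylElement * A * weylElement⁻¹) := isConj_iff.2 ⟨_, rfl⟩
    have h01 : (weylElement * A * weylElement⁻¹ : SL(2, K)) 0 1 ≠ 0 := by
      simpa [sl2_mul_apply, weylElement, Matrix.adjugate_fin_two_of,
        -Matrix.SpecialLinearGroup.coe_mul] using hA10
    exact ⟨_, h01, hconj'.trans (hconj _ ((trace_eq_of_isConj hconj').symm.trans htr) h01)⟩
  · exact ⟨_, hA01, hconj A htr hA01⟩

theorem isConj_upperUnipotent_iff {x y : K} (hx : x ≠ 0) :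
    IsConj (upperUnipotent (.ofAdd x)) (upperUnipotent (.ofAdd y)) ↔
      ∃ s ≠ 0, y = s ^ 2 * x := by
  constructor
  · intro h
    obtain ⟨P, hP⟩ := isConj_iff.1 h
    have hP := sl2_ext_iff.1 (mul_inv_eq_iff_eq_mul.1 hP)
    simp only [sl2_mul_apply, upperUnipotent_apply] at hP
    have hP10 : P 1 0 = 0 := by simpa [hx] using hP.2.2
    have hdet := sl2_det_eq_one P
    refine ⟨P 0 0, fun hP00 => ?_, ?_⟩
    · simp [hP10, hP00] at hdet
    · have hP01 : P 0 0 * x + P 0 1 = P 0 1 + y * P 1 1 := by simpa using hP.1.2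
      linear_combination -P 0 1 * y * hP10 - P 0 0 * hP01 - y * hdet
  · rintro ⟨s, hs, rfl⟩
    exact sl2_isConj_of_trace_eq (by simp [upperUnipotent]) hx hs rfl

section TwistedFrobenius

/-- Conjugation by the matrix `diag(1, -1)` of determinant `-1`. -/
def signTwist {R : Type*} [CommRing R] : SL(2, R) →* SL(2, R) where
  toFun A := slMk (A 0 0) (-A 0 1) (-A 1 0) (A 1 1) (by simp [sl2_det_eq_one])
  map_one' := by simp [sl2_ext_iff]
  map_mul' A B := by
    simp [sl2_ext_iff, sl2_mul_apply, -Matrix.SpecialLinearGroup.coe_mul, add_comm]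

variable [Finite K] (p : ℕ) [ExpChar K p]

/-- The automorphism of `SL(2, K)` raising all entries to the `p`-th power and then conjugating
by `diag(1, -1)`. -/
def twistedFrobenius : MulAut SL(2, K) :=
  MulEquiv.ofBijective (signTwist.comp (Matrix.SpecialLinearGroup.map (frobenius K p)))
    (Finite.injective_iff_bijective.1 fun A B h => by
      simpa [sl2_ext_iff, signTwist, (frobenius_inj K p).eq_iff] using h)

theorem trace_twistedFrobenius (A : SL(2, K)) : (twistedFrobenius p A).1.trace = A.1.trace ^ p := by
  simp [twistedFrobenius, signTwist, Matrix.trace_fin_two, add_pow_expChar, frobenius_def]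

theorem twistedFrobenius_upperUnipotent (x : K) :
    twistedFrobenius p (upperUnipotent (.ofAdd x)) = upperUnipotent (.ofAdd (-x ^ p)) := by
  simpa [sl2_ext_iff, twistedFrobenius, signTwist, upperUnipotent] using frobenius_def p x

theorem twistedFrobenius_neg (A : SL(2, K)) : twistedFrobenius p (-A) = -twistedFrobenius p A := by
  simp [sl2_ext_iff, twistedFrobenius, signTwist]

theorem eq_one_of_isConj_twistedFrobenius [CharP K 3] (hK : ¬ IsSquare (-1 : K)) {A : SL(2, K)}
    (hA : IsConj (twistedFrobenius 3 A) A) (htr : A.1.trace = 2) : A = 1 := by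
  by_contra hne
  obtain ⟨x, hx, hAx⟩ := exists_isConj_upperUnipotent htr hne
  have hconj : IsConj (upperUnipotent (.ofAdd x)) (upperUnipotent (.ofAdd (-x ^ 3))) :=
    twistedFrobenius_upperUnipotent 3 x ▸
      hAx.symm.trans (hA.symm.trans ((twistedFrobenius 3).toMonoidHom.map_isConj hAx))
  obtain ⟨s, -, hs⟩ := (isConj_upperUnipotent_iff hx).1 hconj
  refine hK ⟨s / x, ?_⟩
  field_simp
  exact mul_right_cancel₀ hx (by linear_combination hs)

end TwistedFrobenius

end SpecialLinearGroupTwo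

section ProjectiveSpecialLinearGroupTwo

variable {K : Type*} [Field K]

theorem sl2_mem_center_iff {A : SL(2, K)} : A ∈ Subgroup.center SL(2, K) ↔ A = 1 ∨ A = -1 := by
  rw [Matrix.SpecialLinearGroup.mem_center_iff]
  constructor
  · rintro ⟨r, hr, hrA⟩
    rw [Fintype.card_fin, sq_eq_one_iff] at hr
    refine hr.imp ?_ ?_ <;> rintro rfl <;> simp [sl2_ext_iff, ← hrA]
  · rintro (rfl | rfl)
    · exact ⟨1, by simp, by simp⟩
    · exact ⟨-1, by simp, by simp [← Matrix.diagonal_one, ← Matrix.diagonal_neg]⟩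

theorem psl2_mk_eq_iff {A B : SL(2, K)} : (A : PSL(2, K)) = B ↔ A = B ∨ A = -B := by
  rw [QuotientGroup.eq, sl2_mem_center_iff, inv_mul_eq_one, inv_mul_eq_iff_eq_mul, mul_neg_one,
    ← neg_eq_iff_eq_neg (a := A), eq_comm (a := B)]

theorem psl2_mk_neg (A : SL(2, K)) : ((-A : SL(2, K)) : PSL(2, K)) = A :=
  psl2_mk_eq_iff.2 (.inr rfl)

theorem psl2_isConj_mk_iff {A B : SL(2, K)} :
    IsConj (A : PSL(2, K)) B ↔ IsConj A B ∨ IsConj A (-B) := by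
  simp only [isConj_iff, ← exists_or, ← psl2_mk_eq_iff]
  exact QuotientGroup.mk_surjective.exists

variable [Finite K]

/-- The automorphism of `PSL(2, K)` induced by `twistedFrobenius p`. -/
def pslTwistedFrobenius (p : ℕ) [ExpChar K p] : MulAut PSL(2, K) :=
  QuotientGroup.congr _ _ (twistedFrobenius p)
    (Subgroup.characteristic_iff_map_eq.1 inferInstance (twistedFrobenius p))

theorem eq_one_or_isConj_weylElement_of_isConj_pslTwistedFrobenius [CharP K 3]
    (hK : ¬ IsSquare (-1 : K)) {g : PSL(2, K)} (hg : IsConj (pslTwistedFrobenius 3 g) g) :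
    g = 1 ∨ IsConj ((weylElement : SL(2, K)) : PSL(2, K)) g := by
  obtain ⟨A, rfl⟩ := QuotientGroup.mk_surjective g
  have hA : IsConj (twistedFrobenius 3 A) A ∨ IsConj (twistedFrobenius 3 A) (-A) :=
    psl2_isConj_mk_iff.1 hg
  by_cases htr : A.1.trace = 0
  · exact .inr (psl2_isConj_mk_iff.2 (isConj_weylElement_of_trace_eq_zero hK htr))
  left
  have hA : IsConj (twistedFrobenius 3 A) A := hA.resolve_right fun h => by
    have htr_pow := trace_eq_of_isConj h
    rw [trace_twistedFrobenius, Matrix.SpecialLinearGroup.coe_neg, Matrix.trace_neg] at htr_pow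
    exact hK ⟨A.1.trace, mul_right_cancel₀ htr (by linear_combination -htr_pow)⟩
  have htr_sq : A.1.trace ^ 2 = 1 := by
    have htr_pow := trace_eq_of_isConj hA
    rw [trace_twistedFrobenius] at htr_pow
    exact mul_right_cancel₀ htr (by linear_combination htr_pow)
  have h3 : (3 : K) = 0 := CharP.cast_eq_zero K 3
  rcases sq_eq_one_iff.1 htr_sq with htr | htr
  · have hneg : -A = 1 := by
      refine eq_one_of_isConj_twistedFrobenius hK ?_ ?_
      · obtain ⟨P, hP⟩ := isConj_iff.1 hA
        exact isConj_iff.2 ⟨P, by rw [twistedFrobenius_neg, mul_neg, neg_mul, hP]⟩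
      · rw [Matrix.SpecialLinearGroup.coe_neg, Matrix.trace_neg, htr]
        linear_combination -h3
    rw [← psl2_mk_neg, hneg]
    rfl
  · rw [eq_one_of_isConj_twistedFrobenius hK hA (by linear_combination htr - h3)]
    rfl

theorem ncard_fixedPoints_conjClasses_map_pslTwistedFrobenius_le [CharP K 3]
    (hK : ¬ IsSquare (-1 : K)) :
    (Function.fixedPoints
      (ConjClasses.map (pslTwistedFrobenius (K := K) 3 : PSL(2, K) →* PSL(2, K)))).ncard ≤ 2 := by
  refine (Set.ncard_le_ncard (t := {1, ConjClasses.mk ((weylElement : SL(2, K)) : PSL(2, K))})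
    ?_ (Set.toFinite _)).trans ((Set.ncard_insert_le _ _).trans_eq (by rw [Set.ncard_singleton]))
  intro c hc
  obtain ⟨g, rfl⟩ := ConjClasses.mk_surjective c
  refine (eq_one_or_isConj_weylElement_of_isConj_pslTwistedFrobenius hK
    (ConjClasses.mk_eq_mk_iff_isConj.1 hc)).imp ?_ ?_
  · rintro rfl
    rfl
  · exact fun h => (ConjClasses.mk_eq_mk_iff_isConj.2 h).symm

end ProjectiveSpecialLinearGroupTwo

section ExtensionToAut

open MulAction

theorem exists_bijective_mulActionHom {G X Y : Type*} [Group G] [MulAction G X] [MulAction G Y]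
    [IsPretransitive G X] [IsPretransitive G Y] {x : X} {y : Y}
    (h : stabilizer G x = stabilizer G y) : ∃ φ : X →[G] Y, Function.Bijective φ := by
  have smul_eq_smul_iff (a b : G) : a • x = b • x ↔ a • y = b • y := by
    rw [← inv_smul_eq_iff, ← inv_smul_eq_iff, ← mul_smul, ← mul_smul, ← mem_stabilizer_iff, h,
      mem_stabilizer_iff]
  choose g hg using exists_smul_eq G x
  refine ⟨⟨fun z => g z • y, fun a z => ?_⟩, fun z z' hz => ?_, fun z => ?_⟩
  · rw [id, ← mul_smul, ← smul_eq_smul_iff, hg, mul_smul, hg]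
  · rw [← hg z, ← hg z', smul_eq_smul_iff]
    exact hz
  · obtain ⟨a, rfl⟩ := exists_smul_eq G y z
    exact ⟨a • x, (smul_eq_smul_iff _ _).1 (hg _)⟩

theorem reducedPermChar_eq_of_bijective {G X Y : Type*} [Group G] [MulAction G X] [MulAction G Y]
    {φ : X →[G] Y} (hφ : Function.Bijective φ) : reducedPermChar G X = reducedPermChar G Y := by
  funext g
  have himage : fixedBy Y g = φ '' fixedBy X g := by
    ext y
    obtain ⟨x, rfl⟩ := hφ.2 y
    rw [hφ.1.mem_set_image, mem_fixedBy, mem_fixedBy, ← map_smul, hφ.1.eq_iff]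
  rw [reducedPermChar, reducedPermChar, himage, Set.ncard_image_of_injective _ hφ.1]

theorem extendsToAut_reducedPermChar_sylow {S : Type} [Group S] {p : ℕ} [Finite S]
    [Nontrivial (Sylow p S)] [IsMultiplyPretransitive S (Sylow p S) 2] :
    ExtendsToAut S (reducedPermChar S (Sylow p S)) := by
  have : IsMultiplyPretransitive (MulAut S) (Sylow p S) 2 := by
    rw [is_two_pretransitive_iff]
    intro P Q P' Q' hPQ hPQ'
    obtain ⟨s, hs⟩ := is_two_pretransitive_iff.1 ‹_› hPQ hPQ'
    exact ⟨MulAut.conj s, hs⟩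
  exact ⟨_, isIrrChar_reducedPermChar (G := MulAut S) (X := Sylow p S), fun s => rfl⟩

theorem extendsToAut_reducedPermChar {S X : Type} [Group S] [Finite S] [MulAction S X]
    [Nontrivial X] [IsMultiplyPretransitive S X 2] {p : ℕ} [Fact p.Prime] {x : X} {P : Sylow p S}
    (hP : stabilizer S x = Subgroup.normalizer (P : Set S)) :
    ExtendsToAut S (reducedPermChar S X) := by
  have := isPretransitive_of_is_two_pretransitive (G := S) (α := X)
  obtain ⟨φ, hφ⟩ := exists_bijective_mulActionHom (hP.trans (P.stabilizer_eq_normalizer).symm)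
  have := hφ.1.nontrivial
  have : IsMultiplyPretransitive S (Sylow p S) 2 := IsPretransitive.of_embedding hφ.2
  rw [reducedPermChar_eq_of_bijective hφ]
  exact extendsToAut_reducedPermChar_sylow

theorem exists_sylow_stabilizer_eq_normalizer {G X : Type*} [Group G] [MulAction G X]
    {p : ℕ} [Fact p.Prime] (hX : ¬ p ∣ Nat.card X) {x : X} {U : Subgroup G} (hU : IsPGroup p U)
    (hUx : ∀ y : X, (∀ u ∈ U, u • y = y) ↔ y = x)
    (hUp : ∀ g ∈ stabilizer G x, (∃ k : ℕ, g ^ p ^ k = 1) → g ∈ U) :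
    ∃ P : Sylow p G, stabilizer G x = Subgroup.normalizer (P : Set G) := by
  obtain ⟨P, hUP⟩ := hU.exists_le_sylow
  have hPU : (P : Subgroup G) ≤ U := by
    obtain ⟨y, hy⟩ := P.isPGroup'.nonempty_fixed_point_of_prime_not_dvd_card X hX
    obtain rfl : y = x := (hUx y).1 fun u hu => hy ⟨u, hUP hu⟩
    intro g hg
    obtain ⟨k, hk⟩ := P.isPGroup' ⟨g, hg⟩
    exact hUp g (hy ⟨g, hg⟩) ⟨k, congrArg Subtype.val hk⟩
  obtain rfl : U = P := le_antisymm hUP hPU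
  have hconj (g : G) (hg : g ∈ stabilizer G x) (u : G) (hu : u ∈ (P : Subgroup G)) :
      g * u * g⁻¹ ∈ (P : Subgroup G) := by
    obtain ⟨k, hk⟩ := hU ⟨u, hu⟩
    have hux : u ∈ stabilizer G x := (hUx x).2 rfl u hu
    refine hUp _ (mul_mem (mul_mem hg hux) (inv_mem hg)) ⟨k, ?_⟩
    rw [conj_pow, show u ^ p ^ k = 1 from congrArg Subtype.val hk, mul_one, mul_inv_cancel]
  refine ⟨P, le_antisymm (fun g hg => ?_) fun g hg => (hUx _).1 fun u hu => ?_⟩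
  · refine Subgroup.mem_normalizer_iff.2 fun u => ⟨hconj g hg u, fun hu => ?_⟩
    simpa [mul_assoc] using hconj g⁻¹ (inv_mem hg) _ hu
  · have hu' : g⁻¹ * u * g ∈ (P : Subgroup G) := (Subgroup.mem_normalizer_iff''.1 hg u).1 hu
    rw [← mul_smul, ← inv_smul_eq_iff, ← mul_smul, ← mul_assoc]
    exact (hUx x).2 rfl _ hu'

end ExtensionToAut

section ProjectiveLine

open MulAction LinearAlgebra.Projectivization

variable {K : Type*} [Field K]

/-- The point `[1 : 0]` of the projective line. -/
def projInfty : ℙ K (Fin 2 → K) :=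
  Projectivization.mk K ![1, 0] (by simp)

theorem mem_stabilizer_projInfty_iff {A : SL(2, K)} :
    A ∈ stabilizer SL(2, K) (projInfty : ℙ K (Fin 2 → K)) ↔ A 1 0 = 0 := by
  rw [mem_stabilizer_iff, projInfty, Projectivization.smul_mk, Projectivization.mk_eq_mk_iff']
  simp [Matrix.SpecialLinearGroup.smul_def, funext_iff, Fin.forall_fin_two, eq_comm]

theorem mk_mem_stabilizer_projInfty_iff {A : SL(2, K)} :
    (A : PSL(2, K)) ∈ stabilizer PSL(2, K) (projInfty : ℙ K (Fin 2 → K)) ↔ A 1 0 = 0 :=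
  mem_stabilizer_projInfty_iff

instance : Nontrivial (ℙ K (Fin 2 → K)) :=
  ⟨projInfty, Projectivization.mk K ![0, 1] (by simp), fun h => by
    simpa [funext_iff] using (Projectivization.mk_eq_mk_iff' ..).1 h⟩

instance : IsMultiplyPretransitive PSL(2, K) (ℙ K (Fin 2 → K)) 2 := by
  rw [is_two_pretransitive_iff]
  intro a b c d hab hcd
  have h : IsMultiplyPretransitive SL(2, K) (ℙ K (Fin 2 → K)) 2 := inferInstance
  obtain ⟨A, hA⟩ := is_two_pretransitive_iff.1 h hab hcd
  exact ⟨A, hA⟩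

variable (K) in
/-- The image in `PSL(2, K)` of the group of upper unipotent matrices. -/
def pslUpperUnipotent : Subgroup PSL(2, K) :=
  ((QuotientGroup.mk' _).comp upperUnipotent).range

theorem forall_pslUpperUnipotent_smul_eq_iff (y : ℙ K (Fin 2 → K)) :
    (∀ u ∈ pslUpperUnipotent K, u • y = y) ↔ y = projInfty := by
  constructor
  · intro h
    obtain ⟨g, rfl⟩ := exists_smul_eq PSL(2, K) projInfty y
    obtain ⟨A, rfl⟩ := QuotientGroup.mk_surjective g
    have hmem : ((A⁻¹ * upperUnipotent (.ofAdd 1) * A : SL(2, K)) : PSL(2, K)) ∈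
        stabilizer PSL(2, K) (projInfty : ℙ K (Fin 2 → K)) := by
      rw [mem_stabilizer_iff, QuotientGroup.mk_mul, QuotientGroup.mk_mul, mul_smul, mul_smul,
        QuotientGroup.mk_inv, inv_smul_eq_iff]
      exact h _ ⟨.ofAdd 1, rfl⟩
    have hentry : (A⁻¹ * upperUnipotent (.ofAdd 1) * A : SL(2, K)) 1 0 = -A 1 0 ^ 2 := by
      have hring : -(A 1 0 * A 0 0) + (-A 1 0 + A 0 0) * A 1 0 = -A 1 0 ^ 2 := by ring
      simpa [sl2_mul_apply, upperUnipotent_apply, Matrix.adjugate_fin_two,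
        -Matrix.SpecialLinearGroup.coe_mul] using hring
    rw [mk_mem_stabilizer_projInfty_iff, hentry, neg_eq_zero, sq_eq_zero_iff] at hmem
    exact mk_mem_stabilizer_projInfty_iff.2 hmem
  · rintro rfl _ ⟨x, rfl⟩
    exact mk_mem_stabilizer_projInfty_iff.2 (by simp [upperUnipotent])

theorem sl2_pow_apply_of_apply_one_zero_eq_zero {A : SL(2, K)} (hA : A 1 0 = 0) (n : ℕ) :
    (A ^ n) 0 0 = A 0 0 ^ n ∧ (A ^ n) 1 0 = 0 := by
  induction n with
  | zero => simp
  | succ n ih => simp [pow_succ, sl2_mul_apply, ih, hA, -Matrix.SpecialLinearGroup.coe_mul]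

variable (p : ℕ) [CharP K p]

theorem isPGroup_pslUpperUnipotent : IsPGroup p (pslUpperUnipotent K) := by
  rintro ⟨_, x, rfl⟩
  refine ⟨1, Subtype.ext ?_⟩
  have hx : x ^ p = 1 := by
    rw [← ofAdd_toAdd x, ← ofAdd_nsmul, nsmul_eq_mul, CharP.cast_eq_zero, zero_mul, ofAdd_zero]
  rw [pow_one, SubmonoidClass.coe_pow, ← map_pow, hx, map_one]
  rfl

theorem not_dvd_card_projectiveLine [Finite K] : ¬ p ∣ Nat.card (ℙ K (Fin 2 → K)) := by
  rw [Projectivization.card_of_finrank_two K _ (by simp), ← CharP.cast_eq_zero_iff K p]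
  have := Fintype.ofFinite K
  rw [Nat.cast_add, Nat.card_eq_fintype_card, Nat.cast_card_eq_zero, zero_add, Nat.cast_one]
  exact one_ne_zero

theorem mem_pslUpperUnipotent_of_pow_eq_one [Fact p.Prime] {g : PSL(2, K)}
    (hg : g ∈ stabilizer PSL(2, K) (projInfty : ℙ K (Fin 2 → K))) (hgp : ∃ k : ℕ, g ^ p ^ k = 1) :
    g ∈ pslUpperUnipotent K := by
  obtain ⟨A, rfl⟩ := QuotientGroup.mk_surjective g
  have hA := mk_mem_stabilizer_projInfty_iff.1 hg
  have hdet := sl2_det_eq_one A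
  obtain ⟨k, hgk⟩ := hgp
  have hpow : A ^ p ^ k = 1 ∨ A ^ p ^ k = -1 := psl2_mk_eq_iff.1 hgk
  have hsq : A 0 0 ^ 2 = 1 := by
    refine iterateFrobenius_inj K p k ?_
    rw [iterateFrobenius_def, ← pow_mul, mul_comm, pow_mul,
      ← (sl2_pow_apply_of_apply_one_zero_eq_zero hA _).1]
    rcases hpow with h | h <;> simp [h]
  have hA11 : A 1 1 = A 0 0 := by
    linear_combination A 0 0 * hdet - A 1 1 * hsq + A 0 0 * A 0 1 * hA
  refine ⟨.ofAdd (A 0 0 * A 0 1), psl2_mk_eq_iff.2 ?_⟩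
  refine (sq_eq_one_iff.1 hsq).imp ?_ ?_ <;> intro h <;>
    simp [sl2_ext_iff, upperUnipotent_apply, h, hA, hA11]

theorem extendsToAut_reducedPermChar_projectiveLine (K : Type) [Field K] [Finite K] :
    ExtendsToAut PSL(2, K) (reducedPermChar PSL(2, K) (ℙ K (Fin 2 → K))) := by
  obtain ⟨p, _⟩ := CharP.exists K
  have : Fact p.Prime := ⟨CharP.char_is_prime K p⟩
  obtain ⟨P, hP⟩ := exists_sylow_stabilizer_eq_normalizer (not_dvd_card_projectiveLine (K := K) p)
    (isPGroup_pslUpperUnipotent p) forall_pslUpperUnipotent_smul_eq_iff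
    fun g hg hgp => mem_pslUpperUnipotent_of_pow_eq_one p hg hgp
  exact extendsToAut_reducedPermChar hP

end ProjectiveLine

section RestrictedInvariants

open Module Representation

variable {G H V : Type*} [Group G] [Group H] [AddCommGroup V] [Module ℂ V] [FiniteDimensional ℂ V]
  (ρ : Representation ℂ G V) (j : H →* G)

theorem sum_character_comp [Fintype H] :
    ∑ h, ρ.character (j h) = Nat.card H * finrank ℂ (invariants (ρ.comp j)) := by
  have hH : (Nat.card H : ℂ) ≠ 0 := NeZero.ne _
  have := invertibleOfNonzero hH
  exact (inv_mul_eq_iff_eq_mul₀ hH).1 (card_inv_mul_sum_char_eq_finrank (ρ.comp j))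

theorem exists_finrank_add_trace_eq_two_mul {f : V →ₗ[ℂ] V} (hf : f * f = 1) :
    ∃ m : ℕ, finrank ℂ V + LinearMap.trace ℂ V f = 2 * m := by
  have hidem : IsIdempotentElem ((2⁻¹ : ℂ) • (1 + f)) := by
    rw [IsIdempotentElem, smul_mul_smul_comm, mul_add, mul_one, add_mul, hf, one_mul,
      add_comm f 1, ← two_smul ℂ (1 + f), smul_smul]
    norm_num
  have htrace := (LinearMap.IsIdempotentElem.isProj_range _ hidem).trace
  rw [map_smul, map_add, LinearMap.trace_one, smul_eq_mul, inv_mul_eq_iff_eq_mul₀ two_ne_zero]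
    at htrace
  exact ⟨_, htrace⟩

theorem card_mul_trace_restrict_invariants [Fintype H] {g : G}
    (hg : ∀ v ∈ invariants (ρ.comp j), ρ g v ∈ invariants (ρ.comp j)) :
    Nat.card H * LinearMap.trace ℂ _ ((ρ g).restrict hg) = ∑ h, ρ.character (g * j h) := by
  have hH : (Fintype.card H : ℂ) ≠ 0 := NeZero.ne _
  have := invertibleOfNonzero hH
  have hproj := isProj_averageMap (ρ.comp j)
  have hmem (v : V) : (ρ g * averageMap (ρ.comp j)) v ∈ invariants (ρ.comp j) :=
    hg _ (hproj.map_mem v)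
  have hrestrict : (ρ g).restrict hg =
      (ρ g * averageMap (ρ.comp j)).restrict fun v _ => hmem v := by
    ext v
    simp only [LinearMap.coe_restrict_apply, Module.End.mul_apply, hproj.map_id v v.2]
  rw [hrestrict, LinearMap.trace_restrict_eq_of_forall_mem _ _ hmem]
  simp [GroupAlgebra.average, Finset.mul_sum, character, hH]

theorem even_finrank_add_finrank_invariants [Finite H] {w : G} (hw : ρ w * ρ w = 1)
    (hwj : ∀ h, ∃ h', j h * w = w * j h') (hχ : ∀ h, ρ.character (w * j h) = ρ.character w) :
    Even (finrank ℂ V + finrank ℂ (invariants (ρ.comp j))) := by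
  have := Fintype.ofFinite H
  have hmem : ∀ v ∈ invariants (ρ.comp j), ρ w v ∈ invariants (ρ.comp j) := by
    intro v hv h
    obtain ⟨h', hh'⟩ := hwj h
    rw [MonoidHom.comp_apply, ← Module.End.mul_apply, ← map_mul, hh', map_mul, Module.End.mul_apply]
    exact congrArg (ρ w) (hv h')
  have htrace : LinearMap.trace ℂ _ ((ρ w).restrict hmem) = ρ.character w := by
    have hcard := card_mul_trace_restrict_invariants ρ j hmem
    rw [Finset.sum_congr rfl fun h _ => hχ h, Finset.sum_const, Finset.card_univ, nsmul_eq_mul,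
      ← Nat.card_eq_fintype_card] at hcard
    exact mul_left_cancel₀ (NeZero.ne _) hcard
  obtain ⟨m, hm⟩ := exists_finrank_add_trace_eq_two_mul hw
  obtain ⟨m', hm'⟩ := exists_finrank_add_trace_eq_two_mul (f := (ρ w).restrict hmem)
    (LinearMap.ext fun v => Subtype.ext (LinearMap.congr_fun hw v))
  rw [htrace] at hm'
  have hsub : (finrank ℂ V + 2 * m' : ℂ) = finrank ℂ (invariants (ρ.comp j)) + 2 * m := by
    rw [← hm, ← hm', character]
    ring
  norm_cast at hsub
  grind

theorem IsIrrChar.invariants_eq_bot {G V : Type} [Group G] [Finite G] [AddCommGroup V] [Module ℂ V]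
    [FiniteDimensional ℂ V] {ρ : Representation ℂ G V} (hρ : IsIrrChar G ρ.character)
    (hne : ρ.character ≠ fun _ => 1) : ρ.invariants = ⊥ := by
  have := Fintype.ofFinite G
  have hsum : ∑ g, ρ.character g = 0 := by simpa using hρ.sum_mul_inv_eq_zero isIrrChar_one hne
  have hfinrank : ∑ g, ρ.character g = Nat.card G * finrank ℂ ρ.invariants :=
    sum_character_comp ρ (MonoidHom.id G)
  rw [hsum, eq_comm, mul_eq_zero_iff_left (NeZero.ne _), Nat.cast_eq_zero] at hfinrank
  exact Submodule.finrank_eq_zero.1 hfinrank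

end RestrictedInvariants

section DegreeCard

open Module Representation MulAction LinearAlgebra.Projectivization

variable {K : Type*} [Field K]

theorem invariants_inf_map_weylElement_le {V : Type*} [AddCommGroup V] [Module ℂ V]
    (ρ : Representation ℂ SL(2, K) V) :
    invariants (ρ.comp upperUnipotent) ⊓ (invariants (ρ.comp upperUnipotent)).map (ρ weylElement) ≤
      ρ.invariants := by
  rintro _ ⟨hv, v, hwv, rfl⟩ A
  induction A using Matrix.SL2.transvection_induction with
  | hmul A B hA hB => rw [map_mul, Module.End.mul_apply, hB, hA]
  | htransvec i j hij c =>
    have hlower : Matrix.SpecialLinearGroup.transvection one_ne_zero c =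
        weylElement * upperUnipotent (.ofAdd (-c)) * (weylElement : SL(2, K))⁻¹ := by
      simp [sl2_ext_iff, Matrix.SpecialLinearGroup.transvection_coe,
        upperUnipotent_apply, weylElement, Matrix.adjugate_fin_two_of]
    have hupper : Matrix.SpecialLinearGroup.transvection zero_ne_one c =
        upperUnipotent (.ofAdd c) := by
      simp [sl2_ext_iff, Matrix.SpecialLinearGroup.transvection_coe,
        upperUnipotent_apply]
    fin_cases i <;> fin_cases j
    · exact absurd rfl hij
    · exact hupper ▸ hv _
    · have hfix : ρ (upperUnipotent (.ofAdd (-c))) v = v := hwv _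
      change ρ (Matrix.SpecialLinearGroup.transvection one_ne_zero c) _ = _
      rw [hlower, ← Module.End.mul_apply, ← map_mul, inv_mul_cancel_right, map_mul,
        Module.End.mul_apply, hfix]
    · exact absurd rfl hij

theorem two_mul_finrank_invariants_upperUnipotent_le {V : Type*} [AddCommGroup V] [Module ℂ V]
    [FiniteDimensional ℂ V] (ρ : Representation ℂ SL(2, K) V) (hρ : ρ.invariants = ⊥) :
    2 * finrank ℂ (invariants (ρ.comp upperUnipotent)) ≤ finrank ℂ V := by
  have hdisj : Disjoint (invariants (ρ.comp upperUnipotent))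
      ((invariants (ρ.comp upperUnipotent)).map (ρ weylElement)) :=
    disjoint_iff_inf_le.2 (hρ ▸ invariants_inf_map_weylElement_le ρ)
  have hle := Submodule.finrank_add_finrank_le_of_disjoint hdisj
  rwa [← (Submodule.equivMapOfInjective _ (ρ.apply_bijective _).1 _).finrank_eq, ← two_mul] at hle

theorem even_finrank_add_finrank_invariants_diagonalTorus [Finite K] (hK : ¬ IsSquare (-1 : K))
    {V : Type*} [AddCommGroup V] [Module ℂ V] [FiniteDimensional ℂ V]
    (ρ : Representation ℂ SL(2, K) V) (hρ : ρ (-1) = 1) :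
    Even (finrank ℂ V + finrank ℂ (invariants (ρ.comp diagonalTorus))) := by
  refine even_finrank_add_finrank_invariants ρ diagonalTorus (w := weylElement) ?_
    (fun a => ⟨a⁻¹, ?_⟩) fun a => ?_
  · have hsq : (weylElement * weylElement : SL(2, K)) = -1 := by
      simp [sl2_ext_iff, weylElement]
    rw [← map_mul, hsq, hρ]
  · simp [sl2_ext_iff, weylElement, diagonalTorus]
  · have htrace : (weylElement * diagonalTorus a : SL(2, K)).1.trace = 0 := by
      simp [weylElement, diagonalTorus, Matrix.trace_fin_two]
    obtain h | h := isConj_weylElement_of_trace_eq_zero hK htrace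
    · exact (character_eq_of_isConj ρ h).symm
    · exact (character_neg hρ _).symm.trans (character_eq_of_isConj ρ h).symm

theorem isConj_diagonalTorus_mul_upperUnipotent {a : Kˣ} (ha : a ≠ 1 ∧ a ≠ -1)
    (x : Multiplicative K) : IsConj (diagonalTorus a * upperUnipotent x) (diagonalTorus a) := by
  have hsq : (a : K) ^ 2 - 1 ≠ 0 := by
    rw [sub_ne_zero, Ne, sq_eq_one_iff]
    exact not_or.2 ⟨fun h => ha.1 (Units.ext h), fun h => ha.2 (Units.ext h)⟩
  refine isConj_iff.2 ⟨upperUnipotent (.ofAdd (a ^ 2 * x.toAdd / (a ^ 2 - 1))),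
    mul_inv_eq_of_eq_mul ?_⟩
  have hentry : a * x.toAdd + a ^ 2 * x.toAdd / (a ^ 2 - 1) * (a : K)⁻¹ =
      a * (a ^ 2 * x.toAdd / (a ^ 2 - 1)) := by
    field_simp
    ring
  simpa [sl2_ext_iff, sl2_mul_apply, upperUnipotent_apply, diagonalTorus] using hentry

section BorelSum

variable [Fintype K] [DecidableEq K] {F : SL(2, K) → ℂ}

theorem sum_stabilizer_projInfty
    [Fintype (stabilizer SL(2, K) (projInfty : ℙ K (Fin 2 → K)))] :
    ∑ A : stabilizer SL(2, K) (projInfty : ℙ K (Fin 2 → K)), F A =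
      ∑ a : Kˣ, ∑ x, F (diagonalTorus a * upperUnipotent x) := by
  have hmem (a : Kˣ) (x : Multiplicative K) :
      diagonalTorus a * upperUnipotent x ∈ stabilizer SL(2, K) (projInfty : ℙ K (Fin 2 → K)) := by
    rw [mem_stabilizer_projInfty_iff]
    simp [diagonalTorus, upperUnipotent_apply]
  rw [← Fintype.sum_prod_type']
  refine (Fintype.sum_bijective (fun p : Kˣ × Multiplicative K =>
    (⟨_, hmem p.1 p.2⟩ : stabilizer SL(2, K) projInfty)) ⟨?_, ?_⟩ _ _ fun _ => rfl).symm
  · rintro ⟨a, x⟩ ⟨b, y⟩ h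
    obtain ⟨⟨rfl, hxy⟩, -⟩ : (a = b ∧ a * x.toAdd = b * y.toAdd) ∧ a = b := by
      simpa [sl2_ext_iff, diagonalTorus, upperUnipotent_apply, Units.ext_iff] using h
    simpa using hxy
  · rintro ⟨A, hA⟩
    have hA10 := mem_stabilizer_projInfty_iff.1 hA
    have hdet := sl2_det_eq_one A
    rw [hA10, mul_zero, sub_zero] at hdet
    have hA00 := left_ne_zero_of_mul_eq_one hdet
    refine ⟨(.mk0 _ hA00, .ofAdd ((A 0 0)⁻¹ * A 0 1)), Subtype.ext ?_⟩
    simp [sl2_ext_iff, diagonalTorus, upperUnipotent_apply, hA10, hA00,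
      eq_inv_of_mul_eq_one_right hdet]

theorem sum_diagonalTorus_mul_upperUnipotent (hF : ∀ A B, IsConj A B → F A = F B)
    (hF_neg : ∀ A, F (-A) = F A) (hK : (-1 : Kˣ) ≠ 1) :
    ∑ a : Kˣ, ∑ x, F (diagonalTorus a * upperUnipotent x) =
      Nat.card K * ∑ a : Kˣ, F (diagonalTorus a) +
        2 * (∑ x : Multiplicative K, F (upperUnipotent x) - Nat.card K * F 1) := by
  have hneg : (diagonalTorus (-1) : SL(2, K)) = -1 := by simp [sl2_ext_iff, diagonalTorus]
  have hdiff : ∑ a : Kˣ, (∑ x, F (diagonalTorus a * upperUnipotent x) -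
      Nat.card K * F (diagonalTorus a)) =
        2 * (∑ x : Multiplicative K, F (upperUnipotent x) - Nat.card K * F 1) := by
    rw [Fintype.sum_eq_add 1 (-1) hK.symm]
    · simp only [hneg, neg_one_mul, hF_neg, map_one, one_mul]
      ring
    · intro a ha
      simp [hF _ _ (isConj_diagonalTorus_mul_upperUnipotent ha _)]
  rw [← hdiff, Finset.sum_sub_distrib, Finset.mul_sum]
  ring

end BorelSum

theorem sum_stabilizer_projInfty_ne_zero [Finite K]
    [Fintype (stabilizer SL(2, K) (projInfty : ℙ K (Fin 2 → K)))] (hK : ¬ IsSquare (-1 : K))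
    (hcard : 3 < Nat.card K) {V : Type*} [AddCommGroup V] [Module ℂ V] [FiniteDimensional ℂ V]
    (ρ : Representation ℂ SL(2, K) V) (hneg : ρ (-1) = 1) (hρ : ρ.invariants = ⊥)
    (hfinrank : finrank ℂ V = Nat.card K) :
    ∑ A : stabilizer SL(2, K) (projInfty : ℙ K (Fin 2 → K)), ρ.character A ≠ 0 := by
  classical
  have := Fintype.ofFinite K
  have hneg_one : (-1 : Kˣ) ≠ 1 := fun h => hK ⟨1, by simpa [Units.ext_iff] using h⟩
  have hodd : Nat.card K % 2 = 1 := Fintype.card_eq_nat_card (α := K) ▸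
    FiniteField.odd_card_of_char_ne_two fun h => hK (FiniteField.isSquare_of_char_two h _)
  have heven := even_finrank_add_finrank_invariants_diagonalTorus hK ρ hneg
  have hle := two_mul_finrank_invariants_upperUnipotent_le ρ hρ
  rw [sum_stabilizer_projInfty, sum_diagonalTorus_mul_upperUnipotent
    (fun _ _ => character_eq_of_isConj ρ) (character_neg hneg) hneg_one,
    sum_character_comp, sum_character_comp, char_one, Nat.card_units,
    Nat.card_congr Multiplicative.toAdd]
  rw [hfinrank] at heven hle ⊢
  set c := finrank ℂ (invariants (ρ.comp diagonalTorus))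
  set d := finrank ℂ (invariants (ρ.comp upperUnipotent))
  set q := Nat.card K
  intro hsum
  have hq : (q : ℂ) ≠ 0 := by exact_mod_cast (by lia : q ≠ 0)
  have hcount : (q - 1) * c + 2 * d = 2 * q := by
    have : ((q - 1 : ℕ) * c + 2 * d : ℂ) = 2 * q :=
      mul_left_cancel₀ hq (by linear_combination hsum)
    exact_mod_cast this
  obtain hc | hc : c = 1 ∨ 3 ≤ c := by grind
  · rw [hc] at hcount
    lia
  · have := Nat.mul_le_mul_left (q - 1) hc
    lia

theorem IsIrrChar.eq_reducedPermChar_projectiveLine {K : Type} [Field K] [Finite K]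
    (hK : ¬ IsSquare (-1 : K)) (hcard : 3 < Nat.card K) {χ : PSL(2, K) → ℂ}
    (hχ : IsIrrChar PSL(2, K) χ) (hχ_one : χ 1 = Nat.card K) :
    χ = reducedPermChar PSL(2, K) (ℙ K (Fin 2 → K)) := by
  have := Fintype.ofFinite (stabilizer SL(2, K) (projInfty : ℙ K (Fin 2 → K)))
  have hmk : Function.Surjective (QuotientGroup.mk' (Subgroup.center SL(2, K))) :=
    QuotientGroup.mk'_surjective _
  obtain ⟨V, _, _, _, ρ, rfl⟩ := hχ.exists_representation
  let ρ' : Representation ℂ SL(2, K) V := ρ.comp (QuotientGroup.mk' (Subgroup.center SL(2, K)))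
  have hρ' : IsIrrChar SL(2, K) ρ'.character := hχ.comp_of_surjective hmk
  have hfinrank : finrank ℂ V = Nat.card K := by exact_mod_cast ρ.char_one.symm.trans hχ_one
  have hne : ρ'.character ≠ fun _ => 1 := by
    intro h
    have h1 := ρ'.char_one.symm.trans (congrFun h 1)
    rw [hfinrank, Nat.cast_eq_one] at h1
    lia
  have hneg : ρ' (-1) = 1 := (congrArg ρ (psl2_mk_neg 1)).trans (map_one ρ)
  have hsum := sum_stabilizer_projInfty_ne_zero hK hcard ρ' hneg
    (hρ'.invariants_eq_bot hne) hfinrank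
  exact hmk.injective_comp_right (hρ'.eq_reducedPermChar hne projInfty hsum)

end DegreeCard

section Steinberg

open LinearAlgebra.Projectivization

variable {K : Type} [Field K] [Finite K]

theorem reducedPermChar_projectiveLine_apply_one :
    reducedPermChar PSL(2, K) (ℙ K (Fin 2 → K)) 1 = Nat.card K := by
  rw [reducedPermChar_one, Projectivization.card_of_finrank_two K _ (Module.finrank_fin_fun K),
    Nat.cast_succ, add_sub_cancel_right]

theorem reducedPermChar_projectiveLine_ne_one :
    reducedPermChar PSL(2, K) (ℙ K (Fin 2 → K)) ≠ fun _ => 1 := fun h =>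
  Finite.one_lt_card.ne'
    (Nat.cast_eq_one.1 (reducedPermChar_projectiveLine_apply_one.symm.trans (congrFun h 1)))

theorem ExtendsToAut.eq_reducedPermChar_projectiveLine [CharP K 3] (hK : ¬ IsSquare (-1 : K))
    {χ : PSL(2, K) → ℂ} (hext : ExtendsToAut PSL(2, K) χ) (hχ : IsIrrChar PSL(2, K) χ)
    (hne : χ ≠ fun _ => 1) : χ = reducedPermChar PSL(2, K) (ℙ K (Fin 2 → K)) := by
  have : Fact (Nat.Prime 3) := ⟨Nat.prime_three⟩
  exact (IsIrrChar.eq_or_eq_of_comp_eq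
    (ncard_fixedPoints_conjClasses_map_pslTwistedFrobenius_le hK) hχ isIrrChar_one
    isIrrChar_reducedPermChar (hext.comp_mulAut _) rfl
    ((extendsToAut_reducedPermChar_projectiveLine K).comp_mulAut _)
    reducedPermChar_projectiveLine_ne_one.symm).resolve_left hne

theorem not_isSquare_neg_one_galoisField_three {f : ℕ} (hf : Odd f) :
    ¬ IsSquare (-1 : GaloisField 3 f) := by
  have := Fintype.ofFinite (GaloisField 3 f)
  obtain ⟨k, rfl⟩ := hf
  have hmod : 3 ^ (2 * k + 1) % 4 = 3 := by
    rw [pow_succ, pow_mul, Nat.mul_mod, Nat.pow_mod]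
    norm_num
  rw [FiniteField.isSquare_neg_one_iff, ← Nat.card_eq_fintype_card,
    GaloisField.card 3 _ (by lia), hmod]
  exact not_not.2 rfl

end Steinberg

/-- For odd `f ≥ 3` and `S = PSL(2, 3^f)`, the only non-principal irreducible character of
`S` having an extension to `Aut S` is the Steinberg character, i.e. the unique irreducible
character of degree `3^f`: a given irreducible character `χ` of `S` is non-principal with an
extension to `Aut S` if and only if `χ(1) = 3^f`. -/
theorem psl_only_steinberg_extends (f : ℕ) (hfodd : Odd f) (hf3 : 3 ≤ f)
    (χ : PSL(2, GaloisField 3 f) → ℂ)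
    (hχ : IsIrrChar (PSL(2, GaloisField 3 f)) χ) :
    (χ ≠ (fun _ => 1) ∧ ExtendsToAut (PSL(2, GaloisField 3 f)) χ) ↔ χ 1 = (3 : ℂ) ^ f := by
  have hK := not_isSquare_neg_one_galoisField_three hfodd
  have hcard : Nat.card (GaloisField 3 f) = 3 ^ f := GaloisField.card 3 f (by lia)
  have hcast : (Nat.card (GaloisField 3 f) : ℂ) = 3 ^ f := by exact_mod_cast hcard
  constructor
  · rintro ⟨hne, hext⟩
    rw [hext.eq_reducedPermChar_projectiveLine hK hχ hne, reducedPermChar_projectiveLine_apply_one,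
      hcast]
  · intro hdeg
    have hcard_gt : 3 < Nat.card (GaloisField 3 f) :=
      hcard ▸ lt_self_pow₀ (by norm_num) (by lia)
    rw [hχ.eq_reducedPermChar_projectiveLine hK hcard_gt (hdeg.trans hcast.symm)]
    exact ⟨reducedPermChar_projectiveLine_ne_one, extendsToAut_reducedPermChar_projectiveLine _⟩
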